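/- arXiv:2103.07650 — 2 statements merged into one kernel-verified Lean document; each statement's English description precedes it below -/
import Mathlib

section
/- Let n ≥ 2, 1 < p̄ < ∞, and let k be an integer with k ≥ 2p̄′, where p̄′ = p̄/(p̄−1). Let r₀ > 0, T > 1, ε > 0, and let (f, g) ∈ (C_c^∞(ℝⁿ))². Let w be a C² function on [0,T) × ℝⁿ with w(0,·) = εf, ∂_t w(0,·) = εg, supported in {(t,x) : |x| ≤ t + r₀}, satisfying ∂_t²w − Δw ≥ H pointwise for a continuous function H ≥ the stated inequality sense with H ∈ L¹((0,T) × ℝⁿ). Then there exists a constant C > 0, depending only on n, k, r₀, p̄ and η (not on R, T, ε, w), such that for all R with 1 ≤ R < T: ε ∫_{ℝⁿ} g(x) dx + ∫_0^T ∫_{ℝⁿ} H ψ_R dx dt ≤ C R^{−2} ∫_0^T ∫_{ℝⁿ} |w| [ψ_R*]^{1/p̄} dx dt. -/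
open MeasureTheory Real ENNReal FourierTransform
open scoped ContDiff

noncomputable section

/-- Euclidean space ℝⁿ. -/
abbrev Spc (n : ℕ) := EuclideanSpace ℝ (Fin n)

/-- Space-time ℝ × ℝⁿ. -/
abbrev STn (n : ℕ) := ℝ × Spc n

variable {n : ℕ}

/-- Directional derivative in the space-time direction `v`. -/
def dirD (v : STn n) (f : STn n → ℝ) : STn n → ℝ := fun p => fderiv ℝ f p v

/-- Time derivative ∂_t. -/
def dtD : (STn n → ℝ) → STn n → ℝ := dirD (1, 0)

/-- Spatial derivative ∂_j. -/
def dxD (j : Fin n) : (STn n → ℝ) → STn n → ℝ := dirD (0, EuclideanSpace.single j 1)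

/-- Spatial Laplacian. -/
def lapD (f : STn n → ℝ) : STn n → ℝ := fun p => ∑ j, dxD j (dxD j f) p

/-- d'Alembertian □ = ∂_t² − Δ. -/
def boxD (f : STn n → ℝ) : STn n → ℝ := fun p => dtD (dtD f) p - lapD f p

/-- Lorentz boost L_j = t ∂_j + x_j ∂_t. -/
def LD (j : Fin n) (f : STn n → ℝ) : STn n → ℝ := fun p => p.1 * dxD j f p + p.2 j * dtD f p

/-- Rotation Ω_{jk} = x_j ∂_k − x_k ∂_j. -/
def RotD (j k : Fin n) (f : STn n → ℝ) : STn n → ℝ := fun p => p.2 j * dxD k f p - p.2 k * dxD j f p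

/-- Scaling S = t ∂_t + x·∇. -/
def SD (f : STn n → ℝ) : STn n → ℝ := fun p => p.1 * dtD f p + ∑ j, p.2 j * dxD j f p

/-- Index type for the Klainerman vector fields. -/
def GIdx (n : ℕ) := Option (Fin n) ⊕ Fin n ⊕ (Fin n × Fin n) ⊕ Unit

instance : Fintype (GIdx n) := by unfold GIdx; infer_instance
instance : DecidableEq (GIdx n) := by unfold GIdx; infer_instance

/-- The Klainerman vector field with index `i`. -/
def Gop : GIdx n → (STn n → ℝ) → STn n → ℝ
  | Sum.inl none => dtD
  | Sum.inl (some j) => dxD j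
  | Sum.inr (Sum.inl j) => LD j
  | Sum.inr (Sum.inr (Sum.inl jk)) => RotD jk.1 jk.2
  | Sum.inr (Sum.inr (Sum.inr _)) => SD

/-- Iterated composition Γ^α along a word of indices. -/
def GwL : List (GIdx n) → (STn n → ℝ) → STn n → ℝ
  | [], f => f
  | a :: l, f => Gop a (GwL l f)

/-- Sum of a quantity over all products of at most `N` Klainerman vector fields. -/
def SumW (N : ℕ) (Φ : (STn n → ℝ) → ℝ≥0∞) (f : STn n → ℝ) : ℝ≥0∞ :=
  ∑ m ∈ Finset.range (N + 1), ∑ w : Fin m → GIdx n, Φ (GwL (List.ofFn w) f)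

/-- Pointwise norm of the full space-time gradient ∂u = (∂_t u, ∇_x u). -/
def gradN (f : STn n → ℝ) (p : STn n) : ℝ := Real.sqrt ((dtD f p) ^ 2 + ∑ j, (dxD j f p) ^ 2)

/-- Fourier transform (in space) of a real valued function. -/
def fourierS (g : Spc n → ℝ) : Spc n → ℂ := 𝓕 (fun x => (g x : ℂ))

/-- ‖ |D|^s g ‖_{L²}, i.e. the L² norm of ξ ↦ |ξ|^s (ℱ g)(ξ). -/
def DsN (s : ℝ) (g : Spc n → ℝ) : ℝ≥0∞ :=
  eLpNorm (fun ξ : Spc n => ‖ξ‖ ^ s * ‖fourierS g ξ‖) 2 volume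

/-- The surface measure on the unit sphere of ℝⁿ. -/
def sphM (n : ℕ) : Measure (Metric.sphere (0 : Spc n) 1) := (volume : Measure (Spc n)).toSphere

/-- The L^q norm of g(r ω) over the unit sphere. -/
def sphN (n : ℕ) (q : ℝ) (g : Spc n → ℝ) (r : ℝ) : ℝ≥0∞ :=
  (∫⁻ o, (‖g (r • (o : Spc n))‖₊ : ℝ≥0∞) ^ q ∂(sphM n)) ^ (1 / q)

/-- The mixed norm ‖g‖_{p,q} = (∫_0^∞ ‖g(r·)‖_{L^q(S^{n-1})}^p r^{n-1} dr)^{1/p}. -/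
def mixN (n : ℕ) (p q : ℝ) (g : Spc n → ℝ) : ℝ≥0∞ :=
  (∫⁻ r in Set.Ioi (0 : ℝ), (sphN n q g r) ^ p * ENNReal.ofReal (r ^ (n - 1))) ^ (1 / p)

/-- A space-time function which is Schwartz in the space variable for each fixed time. -/
def SchwartzInX (v : STn n → ℝ) : Prop :=
  ∀ t : ℝ, ∃ φ : SchwartzMap (Spc n) ℝ, ∀ x, v (t, x) = φ x

/-- The space-time partial derivatives ∂_0 = ∂_t, ∂_j (j = 1,2,3) on ℝ × ℝ³. -/
def pd4 (α : Fin 4) : (STn 3 → ℝ) → STn 3 → ℝ := Fin.cases dtD (fun j => dxD j) α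

/-- The null condition for a set of coefficients {A^{αβ}}. -/
def NullCond (A : Fin 4 → Fin 4 → ℝ) : Prop :=
  ∀ X : Fin 4 → ℝ, (X 0) ^ 2 = (X 1) ^ 2 + (X 2) ^ 2 + (X 3) ^ 2 →
    ∑ α, ∑ β, A α β * X α * X β = 0

/-- The null form A^{αβ} (∂_α v)(∂_β w). -/
def QF (A : Fin 4 → Fin 4 → ℝ) (v w : STn 3 → ℝ) (p : STn 3) : ℝ :=
  ∑ α, ∑ β, A α β * pd4 α v p * pd4 β w p

/-- The good derivative T_j = ∂_j + (x_j/|x|) ∂_t. -/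
def TD (j : Fin 3) (f : STn 3 → ℝ) (p : STn 3) : ℝ := dxD j f p + (p.2 j / ‖p.2‖) * dtD f p

end

/-!
Test the inequality `□w ≥ H` against a function `ψ` of time alone. The difference `ψ □w - w ψ''`
is the space-time divergence of `(ψ ∂ₜw - w ψ', -ψ ∇w)`. The spatial flux vanishes since `w` has
bounded spatial support, and if `ψ = 1` near `0` and `ψ = ψ' = 0` at time `T`, only
`-∫ ∂ₜw(0, x) dx` is left of the temporal flux. Hence `∫ ∂ₜw(0, x) dx + ∬ H ψ ≤ ∬ w ψ''`.

Take `ψ t = η (t / R) ^ k`. The second derivative of `η ^ k` is `η ^ (k - 2)` times a bounded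
function and vanishes off `[1 / 2, 1]`. The condition `k ≥ 2 p'`, with `p'` the exponent conjugate
to `p`, says precisely that `k / p ≤ k - 2`, so `η ^ (k - 2)` is bounded by `(η ^ k) ^ (1 / p)`.
The two time derivatives of `η (t / R)` produce the factor `R⁻²`.
-/

open Set Topology

theorem integrableOn_Ioo_prod_univ {E V : Type*} [TopologicalSpace E] [SecondCountableTopology E]
    [T2Space E] [MeasurableSpace E] [BorelSpace E] [NormedAddCommGroup V] {μ : Measure E}
    [IsFiniteMeasureOnCompacts μ] {K : Set E} (hK : IsCompact K) {a b : ℝ} {F : ℝ × E → V}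
    (hF : Continuous F) (hFK : EqOn F 0 (Ioo a b ×ˢ Kᶜ)) :
    IntegrableOn F (Ioo a b ×ˢ univ) (volume.prod μ) := by
  have hcompact : IntegrableOn F (Icc a b ×ˢ K) (volume.prod μ) :=
    hF.continuousOn.integrableOn_compact (isCompact_Icc.prod hK)
  refine (hcompact.mono_set (prod_mono_left Ioo_subset_Icc_self)).of_forall_sdiff_eq_zero
    (measurableSet_Ioo.prod MeasurableSet.univ) fun z hz => hFK ⟨hz.1.1, fun hzK => ?_⟩
  exact hz.2 ⟨hz.1.1, hzK⟩

theorem integrableOn_mul_comp_fst {E : Type*} [MeasurableSpace E] {μ : Measure E} {a b : ℝ}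
    {H : ℝ × E → ℝ} {ψ : ℝ → ℝ} (hψ : Continuous ψ)
    (hH : IntegrableOn H (Ioo a b ×ˢ univ) (volume.prod μ)) :
    IntegrableOn (fun z => H z * ψ z.1) (Ioo a b ×ˢ univ) (volume.prod μ) := by
  obtain ⟨M, hM⟩ := (isCompact_Icc (a := a) (b := b)).exists_bound_of_continuousOn
    hψ.continuousOn
  refine Integrable.mul_bdd (c := M) hH
    (hψ.measurable.comp measurable_fst).aestronglyMeasurable ?_
  filter_upwards [ae_restrict_mem (measurableSet_Ioo.prod MeasurableSet.univ)] with z hz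
  exact hM z.1 (Ioo_subset_Icc_self hz.1)

theorem setIntegral_Ioo_prod_univ_eq_sub_of_hasDerivAt {E V : Type*} [MeasurableSpace E]
    [NormedAddCommGroup V] [NormedSpace ℝ V] [CompleteSpace V] {μ : Measure E} [SFinite μ]
    {a b : ℝ} (hab : a ≤ b) {G G' : ℝ × E → V}
    (hG : ∀ t ∈ Icc a b, ∀ x, HasDerivAt (fun s => G (s, x)) (G' (t, x)) t)
    (hG' : IntegrableOn G' (Ioo a b ×ˢ univ) (volume.prod μ)) :
    ∫ z in Ioo a b ×ˢ univ, G' z ∂(volume.prod μ) = ∫ x, (G (b, x) - G (a, x)) ∂μ := by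
  rw [IntegrableOn, ← Measure.prod_restrict, Measure.restrict_univ] at hG'
  rw [← Measure.prod_restrict, Measure.restrict_univ, integral_prod_symm _ hG']
  refine integral_congr_ae ?_
  filter_upwards [hG'.prod_left_ae] with x hx
  rw [← integral_Ioc_eq_integral_Ioo, ← intervalIntegral.integral_of_le hab]
  refine intervalIntegral.integral_eq_sub_of_hasDerivAt
    (fun t ht => hG t (uIcc_of_le hab ▸ ht) x) ?_
  rwa [intervalIntegrable_iff_integrableOn_Ioo_of_le hab]

theorem integral_fderiv_apply_eq_zero {E V : Type*} [NormedAddCommGroup E] [NormedSpace ℝ E]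
    [FiniteDimensional ℝ E] [MeasurableSpace E] [BorelSpace E] [NormedAddCommGroup V]
    [NormedSpace ℝ V] {μ : Measure E} [μ.IsAddHaarMeasure] {f : E → V} (hf : ContDiff ℝ 1 f)
    (hfs : HasCompactSupport f) (v : E) :
    ∫ x, fderiv ℝ f x v ∂μ = 0 := by
  have hf' : Continuous fun x => fderiv ℝ f x v :=
    (hf.continuous_fderiv one_ne_zero).clm_apply continuous_const
  have parts := integral_smul_fderiv_eq_neg_fderiv_smul_of_integrable (𝕜 := ℝ) (μ := μ)
    (f := fun _ => (1 : ℝ)) (g := f) (v := v) (by simp)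
    (by simpa using hf'.integrable_of_hasCompactSupport (hfs.fderiv_apply (𝕜 := ℝ) v))
    (by simpa using hf.continuous.integrable_of_hasCompactSupport hfs)
    (fun _ _ => by fun_prop) (fun x _ => hf.differentiable one_ne_zero x)
  simpa using parts

section DAlembertian

variable {n : ℕ} {a b : ℝ} {f w : STn n → ℝ} {ψ : ℝ → ℝ} {U : Set (STn n)} {K : Set (Spc n)}

theorem contDiff_dirD {m m' : WithTop ℕ∞} (hf : ContDiff ℝ m' f)
    (hm : m + 1 ≤ m') (v : STn n) : ContDiff ℝ m (dirD v f) :=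
  (hf.fderiv_right hm).clm_apply contDiff_const

theorem eqOn_dirD_zero (hU : IsOpen U)
    (hf : EqOn f 0 U) (v : STn n) : EqOn (dirD v f) 0 U := fun z hz => by
  simp [dirD, (hf.eventuallyEq_of_mem (hU.mem_nhds hz)).fderiv_eq]

theorem hasDerivAt_dtD {z : STn n} (hf : DifferentiableAt ℝ f z) :
    HasDerivAt (fun s => f (s, z.2)) (dtD f z) z.1 :=
  hf.hasFDerivAt.comp_hasDerivAt z.1 ((hasDerivAt_id z.1).prodMk (hasDerivAt_const z.1 z.2))

theorem dxD_eq_fderiv_slice (hf : Differentiable ℝ f) (j : Fin n) (t : ℝ) (x : Spc n) :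
    dxD j f (t, x) = fderiv ℝ (fun y => f (t, y)) x (EuclideanSpace.single j 1) := by
  have h := (hf (t, x)).hasFDerivAt.comp x (hasFDerivAt_prodMk_right t x)
  rw [show (fun y => f (t, y)) = f ∘ (t, ·) from rfl, h.fderiv]
  rfl

theorem continuous_dirD_dirD (hf : ContDiff ℝ 2 f) (v : STn n) :
    Continuous (dirD v (dirD v f)) :=
  (contDiff_dirD (m := 0) (contDiff_dirD (m := 1) hf one_add_one_eq_two.le v) le_rfl v).continuous

theorem integral_lapD_slice_eq_zero (hw : ContDiff ℝ 2 w) {t : ℝ}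
    (hwt : HasCompactSupport fun x => w (t, x)) :
    ∫ x, lapD w (t, x) = 0 := by
  have hw₁ j : ContDiff ℝ 1 (dxD j w) := contDiff_dirD hw one_add_one_eq_two.le _
  have hslice {f : STn n → ℝ} (hf : ContDiff ℝ 1 f) (hfs : HasCompactSupport fun x => f (t, x))
      (j : Fin n) : HasCompactSupport (fun x => dxD j f (t, x)) ∧ ∫ x, dxD j f (t, x) = 0 := by
    simp only [dxD_eq_fderiv_slice (hf.differentiable one_ne_zero)]
    exact ⟨hfs.fderiv_apply (𝕜 := ℝ) _,
      integral_fderiv_apply_eq_zero (hf.comp (contDiff_prodMk_right t)) hfs _⟩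
  have hsupp j := (hslice (hw.of_le one_le_two) hwt j).1
  simp only [lapD]
  rw [integral_finsetSum]
  · exact Finset.sum_eq_zero fun j _ => (hslice (hw₁ j) (hsupp j) j).2
  · refine fun j _ => Continuous.integrable_of_hasCompactSupport ?_ (hslice (hw₁ j) (hsupp j) j).1
    exact (contDiff_dirD (m := 0) (hw₁ j) le_rfl _).continuous.comp (Continuous.prodMk_right t)

theorem continuous_lapD (hw : ContDiff ℝ 2 w) : Continuous (lapD w) :=
  continuous_finsetSum _ fun _ _ => continuous_dirD_dirD hw _

theorem continuous_boxD (hw : ContDiff ℝ 2 w) : Continuous (boxD w) :=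
  (continuous_dirD_dirD hw _).sub (continuous_lapD hw)

theorem eqOn_lapD_zero (hU : IsOpen U) (hw : EqOn w 0 U) : EqOn (lapD w) 0 U := fun _ hz =>
  Finset.sum_eq_zero fun _ _ => eqOn_dirD_zero hU (eqOn_dirD_zero hU hw _) _ hz

theorem eqOn_boxD_zero (hU : IsOpen U) (hw : EqOn w 0 U) : EqOn (boxD w) 0 U :=
  fun _ hz => sub_eq_zero.2 <|
    (eqOn_dirD_zero hU (eqOn_dirD_zero hU hw _) _ hz).trans (eqOn_lapD_zero hU hw hz).symm

theorem setIntegral_lapD_mul_eq_zero (hw : ContDiff ℝ 2 w) (hψ : Continuous ψ) (hK : IsCompact K)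
    (hwK : EqOn w 0 (Ioo a b ×ˢ Kᶜ)) :
    ∫ z in Ioo a b ×ˢ univ, lapD w z * ψ z.1 = 0 := by
  have hU : IsOpen (Ioo a b ×ˢ Kᶜ) := isOpen_Ioo.prod hK.isClosed.isOpen_compl
  have hint : IntegrableOn (fun z => lapD w z * ψ z.1) (Ioo a b ×ˢ univ) (volume.prod volume) :=
    integrableOn_mul_comp_fst hψ
      (integrableOn_Ioo_prod_univ hK (continuous_lapD hw) (eqOn_lapD_zero hU hwK))
  rw [Measure.volume_eq_prod, setIntegral_prod _ hint]
  refine setIntegral_eq_zero_of_forall_eq_zero fun t ht => ?_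
  have hwt : HasCompactSupport fun x => w (t, x) :=
    HasCompactSupport.intro hK fun x hx => hwK ⟨ht, hx⟩
  simp only [Measure.restrict_univ, integral_mul_const, integral_lapD_slice_eq_zero hw hwt,
    zero_mul]

theorem hasDerivAt_dtD_mul_sub_mul_deriv (hw : ContDiff ℝ 2 w) (hψ : ContDiff ℝ 2 ψ) (t : ℝ)
    (x : Spc n) :
    HasDerivAt (fun s => dtD w (s, x) * ψ s - w (s, x) * deriv ψ s)
      (dtD (dtD w) (t, x) * ψ t - w (t, x) * deriv (deriv ψ) t) t := by
  have hdtw : ContDiff ℝ 1 (dtD w) := contDiff_dirD hw one_add_one_eq_two.le _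
  have hw' := hasDerivAt_dtD (hw.differentiable two_ne_zero (t, x))
  have hw'' := hasDerivAt_dtD (hdtw.differentiable one_ne_zero (t, x))
  have hψ' := (hψ.differentiable two_ne_zero t).hasDerivAt
  have hψ'' := (hψ.differentiable_deriv_two t).hasDerivAt
  exact ((hw''.mul hψ').sub (hw'.mul hψ'')).congr_deriv (by ring)

theorem setIntegral_boxD_mul_sub_mul_deriv_deriv (hab : a ≤ b) (hw : ContDiff ℝ 2 w)
    (hψ : ContDiff ℝ 2 ψ) (hK : IsCompact K) (hwK : EqOn w 0 (Ioo a b ×ˢ Kᶜ)) :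
    ∫ z in Ioo a b ×ˢ univ, (boxD w z * ψ z.1 - w z * deriv (deriv ψ) z.1) =
      ∫ x, ((dtD w (b, x) * ψ b - w (b, x) * deriv ψ b) -
        (dtD w (a, x) * ψ a - w (a, x) * deriv ψ a)) := by
  have hU : IsOpen (Ioo a b ×ˢ Kᶜ) := isOpen_Ioo.prod hK.isClosed.isOpen_compl
  have hint {F : STn n → ℝ} {φ : ℝ → ℝ} (hF : Continuous F) (hFK : EqOn F 0 (Ioo a b ×ˢ Kᶜ))
      (hφ : Continuous φ) : IntegrableOn (fun z => F z * φ z.1) (Ioo a b ×ˢ univ) :=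
    integrableOn_mul_comp_fst hφ (integrableOn_Ioo_prod_univ hK hF hFK)
  have hψ'' : Continuous (deriv (deriv ψ)) := (hψ.iterate_deriv' 0 2).continuous
  have hlap := hint (continuous_lapD hw) (eqOn_lapD_zero hU hwK) hψ.continuous
  have htime : IntegrableOn (fun z => dtD (dtD w) z * ψ z.1 - w z * deriv (deriv ψ) z.1)
      (Ioo a b ×ˢ univ) :=
    (hint (continuous_dirD_dirD hw _) (eqOn_dirD_zero hU (eqOn_dirD_zero hU hwK _) _)
      hψ.continuous).sub (hint hw.continuous hwK hψ'')
  calc ∫ z in Ioo a b ×ˢ univ, (boxD w z * ψ z.1 - w z * deriv (deriv ψ) z.1)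
      = ∫ z in Ioo a b ×ˢ univ, ((dtD (dtD w) z * ψ z.1 - w z * deriv (deriv ψ) z.1)
          - lapD w z * ψ z.1) := by congr with z; simp only [boxD]; ring
    _ = ∫ z in Ioo a b ×ˢ univ, (dtD (dtD w) z * ψ z.1 - w z * deriv (deriv ψ) z.1) := by
        rw [integral_sub htime hlap, setIntegral_lapD_mul_eq_zero hw hψ.continuous hK hwK, sub_zero]
    _ = _ := setIntegral_Ioo_prod_univ_eq_sub_of_hasDerivAt hab
        (G := fun z => dtD w z * ψ z.1 - w z * deriv ψ z.1)
        (fun t _ x => hasDerivAt_dtD_mul_sub_mul_deriv hw hψ t x) htime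

theorem integral_dtD_add_setIntegral_mul_le {T : ℝ} (hT : 0 ≤ T) {H : STn n → ℝ}
    (hw : ContDiff ℝ 2 w) (hK : IsCompact K) (hwK : EqOn w 0 (Ioo 0 T ×ˢ Kᶜ))
    (hH : IntegrableOn H (Ioo 0 T ×ˢ univ))
    (hbox : ∀ z ∈ Ioo 0 T ×ˢ univ, H z ≤ boxD w z) (hψ : ContDiff ℝ 2 ψ) (hψ_nonneg : 0 ≤ ψ)
    (hψ0 : ψ =ᶠ[𝓝 0] 1) (hψT : ψ T = 0) :
    (∫ x, dtD w (0, x)) + ∫ z in Ioo 0 T ×ˢ univ, H z * ψ z.1 ≤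
      ∫ z in Ioo 0 T ×ˢ univ, w z * deriv (deriv ψ) z.1 := by
  have hψ'0 : deriv ψ 0 = 0 := by simp [hψ0.deriv_eq]
  have hψ'T : deriv ψ T = 0 :=
    IsLocalMin.deriv_eq_zero (Filter.Eventually.of_forall fun t => hψT.trans_le (hψ_nonneg t))
  have hHψ := integrableOn_mul_comp_fst hψ.continuous hH
  have hboxψ : IntegrableOn (fun z => boxD w z * ψ z.1) (Ioo 0 T ×ˢ univ) :=
    integrableOn_mul_comp_fst hψ.continuous <| integrableOn_Ioo_prod_univ hK (continuous_boxD hw) <|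
      eqOn_boxD_zero (isOpen_Ioo.prod hK.isClosed.isOpen_compl) hwK
  have hwψ : IntegrableOn (fun z => w z * deriv (deriv ψ) z.1) (Ioo 0 T ×ˢ univ) :=
    integrableOn_mul_comp_fst (hψ.iterate_deriv' 0 2).continuous
      (integrableOn_Ioo_prod_univ hK hw.continuous hwK)
  have hmono : ∫ z in Ioo 0 T ×ˢ univ, H z * ψ z.1 ≤ ∫ z in Ioo 0 T ×ˢ univ, boxD w z * ψ z.1 :=
    setIntegral_mono_on hHψ hboxψ (measurableSet_Ioo.prod MeasurableSet.univ) fun z hz =>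
      mul_le_mul_of_nonneg_right (hbox z hz) (hψ_nonneg z.1)
  have hgreen := setIntegral_boxD_mul_sub_mul_deriv_deriv hT hw hψ hK hwK
  rw [integral_sub hboxψ hwψ] at hgreen
  simp only [hψT, hψ'T, hψ'0, hψ0.self_of_nhds, mul_zero, sub_zero, zero_sub, Pi.one_apply,
    mul_one, integral_neg] at hgreen
  linarith

end DAlembertian

theorem deriv_deriv_pow {𝕜 : Type*} [NontriviallyNormedField 𝕜] {f : 𝕜 → 𝕜}
    (hf : ContDiff 𝕜 2 f) (m : ℕ) :
    deriv (deriv fun x => f x ^ (m + 2)) = fun x =>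
      f x ^ m * ((m + 2) * ((m + 1) * deriv f x ^ 2 + f x * deriv (deriv f) x)) := by
  have hf₀ x : HasDerivAt f (deriv f x) x := (hf.differentiable two_ne_zero x).hasDerivAt
  have hf₁ x : HasDerivAt (deriv f) (deriv (deriv f) x) x :=
    (hf.differentiable_deriv_two x).hasDerivAt
  have hpow : (deriv fun x => f x ^ (m + 2)) = fun x => (m + 2) * f x ^ (m + 1) * deriv f x :=
    funext fun x => ((hf₀ x).fun_pow (m + 2)).deriv.trans (by push_cast; simp)
  rw [hpow]
  ext x
  refine ((((hf₀ x).fun_pow (m + 1)).const_mul ((m : 𝕜) + 2)).fun_mul (hf₁ x)).deriv.trans ?_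
  push_cast [Nat.add_sub_cancel]
  ring

theorem deriv_deriv_comp_div {𝕜 : Type*} [NontriviallyNormedField 𝕜] (f : 𝕜 → 𝕜) (c x : 𝕜) :
    deriv (deriv fun y => f (y / c)) x = deriv (deriv f) (x / c) / c ^ 2 := by
  have h (g : 𝕜 → 𝕜) : (deriv fun y => g (y / c)) = fun y => c⁻¹ * deriv g (y / c) := by
    ext y
    simpa [div_eq_inv_mul] using deriv_comp_mul_left c⁻¹ g y
  rw [h, deriv_const_mul_field, h]
  ring

theorem deriv_deriv_eq_zero_of_eventuallyEq_const {𝕜 V : Type*} [NontriviallyNormedField 𝕜]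
    [NormedAddCommGroup V] [NormedSpace 𝕜 V] {f : 𝕜 → V} {x : 𝕜} {c : V}
    (h : f =ᶠ[𝓝 x] fun _ => c) : deriv (deriv f) x = 0 := by
  simp [h.deriv.deriv_eq]

theorem exists_abs_deriv_deriv_pow_le {f : ℝ → ℝ} (hf : ContDiff ℝ 2 f) {S : Set ℝ}
    (hS : IsCompact S) (hfS : ∀ x ∈ S, 0 ≤ f x) {k : ℕ} {q : ℝ} (hq : 0 ≤ q) (hqk : 2 + q ≤ k) :
    ∃ C > 0, ∀ x ∈ S, |deriv (deriv fun x => f x ^ k) x| ≤ C * f x ^ q := by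
  obtain ⟨m, rfl⟩ : ∃ m, k = m + 2 :=
    Nat.exists_eq_add_of_le' (by exact_mod_cast (le_add_of_nonneg_right hq).trans hqk)
  have hqm : 0 ≤ m - q := by push_cast at hqk; linarith
  set A : ℝ → ℝ := fun x => (m + 2) * ((m + 1) * deriv f x ^ 2 + f x * deriv (deriv f) x)
  have hA : Continuous fun x => f x ^ (m - q) * A x := by
    have := hf.continuous
    have := hf.continuous_deriv one_le_two
    have : Continuous (deriv (deriv f)) := (hf.iterate_deriv' 0 2).continuous
    have := hf.continuous.rpow_const fun _ => Or.inr hqm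
    fun_prop
  obtain ⟨B, hB⟩ := hS.exists_bound_of_continuousOn hA.continuousOn
  refine ⟨|B| + 1, by positivity, fun x hx => ?_⟩
  have hfactor : deriv (deriv fun x => f x ^ (m + 2)) x = f x ^ q * (f x ^ (m - q) * A x) := by
    rw [deriv_deriv_pow hf, ← mul_assoc, ← rpow_add_of_nonneg (hfS x hx) hq hqm,
      add_sub_cancel, Real.rpow_natCast]
  rw [hfactor, abs_mul, abs_of_nonneg (rpow_nonneg (hfS x hx) q), mul_comm]
  exact mul_le_mul_of_nonneg_right (((hB x hx).trans (le_abs_self B)).trans (by linarith))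
    (rpow_nonneg (hfS x hx) q)

/-- The paper's `η*`: the cutoff `η` with its plateau `s < 1 / 2` removed. -/
noncomputable def cutoffStar (η : ℝ → ℝ) (s : ℝ) : ℝ := if s < 1 / 2 then 0 else η s

theorem cutoffStar_nonneg {η : ℝ → ℝ} (hη : 0 ≤ η) (s : ℝ) : 0 ≤ cutoffStar η s :=
  ite_nonneg le_rfl (hη s)

theorem cutoffStar_le {η : ℝ → ℝ} (hη : 0 ≤ η) (s : ℝ) : cutoffStar η s ≤ η s := by
  unfold cutoffStar
  split_ifs
  exacts [hη s, le_rfl]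

theorem measurable_cutoffStar {η : ℝ → ℝ} (hη : Measurable η) : Measurable (cutoffStar η) :=
  Measurable.ite measurableSet_Iio measurable_const hη

theorem exists_abs_deriv_deriv_pow_le_cutoffStar {η : ℝ → ℝ} (hη : ContDiff ℝ 2 η)
    (hη_nonneg : 0 ≤ η) (hη_one : ∀ s ≤ 1 / 2, η s = 1) (hη_zero : ∀ s ≥ 1, η s = 0) {k : ℕ}
    {p : ℝ} (hp : 0 ≤ p) (hkp : 2 + k * (1 / p) ≤ k) :
    ∃ C > 0, ∀ s,
      |deriv (deriv fun s => η s ^ k) s| ≤ C * (cutoffStar η s ^ k) ^ (1 / p) := by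
  obtain ⟨C, hC, hbound⟩ := exists_abs_deriv_deriv_pow_le hη (isCompact_Icc (a := 1 / 2) (b := 1))
    (fun s _ => hη_nonneg s) (by positivity) hkp
  have hstar_nonneg := cutoffStar_nonneg hη_nonneg
  refine ⟨C, hC, fun s => ?_⟩
  rcases lt_or_ge s (1 / 2) with hs | hs
  · have hconst : (fun s => η s ^ k) =ᶠ[𝓝 s] fun _ => 1 := by
      filter_upwards [Iio_mem_nhds hs] with y hy using by simp [hη_one y (le_of_lt hy)]
    rw [deriv_deriv_eq_zero_of_eventuallyEq_const hconst, abs_zero]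
    have := hstar_nonneg s
    positivity
  rcases le_or_gt s 1 with hs' | hs'
  · rw [cutoffStar, if_neg hs.not_gt, ← Real.rpow_natCast_mul (hη_nonneg s)]
    exact hbound s ⟨hs, hs'⟩
  · have hconst : (fun s => η s ^ k) =ᶠ[𝓝 s] fun _ => 0 ^ k := by
      filter_upwards [Ioi_mem_nhds hs'] with y hy using by simp [hη_zero y (le_of_lt hy)]
    rw [deriv_deriv_eq_zero_of_eventuallyEq_const hconst, abs_zero]
    have := hstar_nonneg s
    positivity

theorem exists_abs_deriv_deriv_pow_div_le_cutoffStar {η : ℝ → ℝ} (hη : ContDiff ℝ 2 η)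
    (hη_nonneg : 0 ≤ η) (hη_one : ∀ s ≤ 1 / 2, η s = 1) (hη_zero : ∀ s ≥ 1, η s = 0) {k : ℕ}
    {p : ℝ} (hp : 0 ≤ p) (hkp : 2 + k * (1 / p) ≤ k) :
    ∃ C > 0, ∀ R > 0, ∀ t, |deriv (deriv fun t => η (t / R) ^ k) t| ≤
      C * R ^ (-2 : ℝ) * (cutoffStar η (t / R) ^ k) ^ (1 / p) := by
  obtain ⟨C, hC, hbound⟩ :=
    exists_abs_deriv_deriv_pow_le_cutoffStar hη hη_nonneg hη_one hη_zero hp hkp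
  refine ⟨C, hC, fun R hR t => ?_⟩
  have hRsq : R ^ (-2 : ℝ) = (R ^ 2)⁻¹ := by rw [Real.rpow_neg hR.le, Real.rpow_two]
  rw [deriv_deriv_comp_div fun s => η s ^ k, abs_div, abs_of_pos (pow_pos hR 2),
    mul_right_comm, hRsq, ← div_eq_mul_inv]
  exact div_le_div_of_nonneg_right (hbound (t / R)) (sq_nonneg R)

theorem two_add_mul_one_div_le {p κ : ℝ} (hp : 1 < p) (hκ : 2 * (p / (p - 1)) ≤ κ) :
    2 + κ * (1 / p) ≤ κ := by
  have hp' : 0 < p - 1 := sub_pos.2 hp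
  have hp₀ : 0 < p := one_pos.trans hp
  rw [← mul_div_assoc, div_le_iff₀ hp'] at hκ
  field_simp
  linarith

theorem integrableOn_abs_mul_cutoffStar {n : ℕ} {a b R p : ℝ} (hp : 0 ≤ p) (k : ℕ) {η : ℝ → ℝ}
    (hη : Continuous η) (hη_nonneg : 0 ≤ η) {w : STn n → ℝ} (hw : Continuous w) {K : Set (Spc n)}
    (hK : IsCompact K) (hwK : EqOn w 0 (Ioo a b ×ˢ Kᶜ)) :
    IntegrableOn (fun z => |w z| * (cutoffStar η (z.1 / R) ^ k) ^ (1 / p)) (Ioo a b ×ˢ univ) := by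
  have hηR : Continuous fun t : ℝ => (η (t / R) ^ k) ^ (1 / p) :=
    Continuous.rpow_const (by fun_prop) fun _ => Or.inr (by positivity)
  have hstar : Measurable fun z : STn n => (cutoffStar η (z.1 / R) ^ k) ^ (1 / p) :=
    (((measurable_cutoffStar hη.measurable).comp (by fun_prop)).pow_const k).pow_const _
  refine Integrable.mono' (integrableOn_mul_comp_fst hηR (integrableOn_Ioo_prod_univ hK hw.abs
    fun z hz => by simp [hwK hz])) (hw.abs.measurable.mul hstar).aestronglyMeasurable
    (ae_of_all _ fun z => ?_)
  have hstar_nonneg := cutoffStar_nonneg hη_nonneg (z.1 / R)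
  rw [Real.norm_of_nonneg (by positivity)]
  gcongr
  exact cutoffStar_le hη_nonneg _

theorem setIntegral_mul_le_of_abs_le_cutoffStar {n : ℕ} {a b M R p : ℝ} (hp : 0 ≤ p) {k : ℕ}
    {η φ : ℝ → ℝ} (hη : Continuous η) (hη_nonneg : 0 ≤ η) (hφ : Continuous φ)
    (hφη : ∀ t, |φ t| ≤ M * (cutoffStar η (t / R) ^ k) ^ (1 / p)) {w : STn n → ℝ}
    (hw : Continuous w) {K : Set (Spc n)} (hK : IsCompact K) (hwK : EqOn w 0 (Ioo a b ×ˢ Kᶜ)) :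
    ∫ z in Ioo a b ×ˢ univ, w z * φ z.1 ≤
      M * ∫ z in Ioo a b ×ˢ univ, |w z| * (cutoffStar η (z.1 / R) ^ k) ^ (1 / p) := by
  have hwφ : IntegrableOn (fun z => w z * φ z.1) (Ioo a b ×ˢ univ) :=
    integrableOn_mul_comp_fst hφ (integrableOn_Ioo_prod_univ hK hw hwK)
  have hwη := integrableOn_abs_mul_cutoffStar (R := R) hp k hη hη_nonneg hw hK hwK
  rw [← integral_const_mul]
  refine integral_mono hwφ (hwη.const_mul M) fun z => (le_abs_self _).trans ?_
  rw [abs_mul, mul_left_comm]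
  exact mul_le_mul_of_nonneg_left (hφη z.1) (abs_nonneg _)

theorem nonneg_of_antitoneOn_Ici {α β : Type*} [LinearOrder α] [Preorder β] [Zero β] {f : α → β}
    {a b : α} (hf : AntitoneOn f (Ici a)) (hfa : ∀ x ≤ a, 0 ≤ f x) (hfb : ∀ x ≥ b, 0 ≤ f x) :
    0 ≤ f := fun x => by
  rcases le_total x a with hx | hx
  · exact hfa x hx
  · exact (hfb _ (le_max_right x b)).trans (hf hx (hx.trans (le_max_left x b)) (le_max_left x b))

theorem test_function_lemma_general {p : ℝ} (hp : 1 < p) {k : ℕ} (hk : 2 * (p / (p - 1)) ≤ k)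
    {η : ℝ → ℝ} (hη : ContDiff ℝ 2 η) (hη_nonneg : 0 ≤ η) (hη_one : ∀ s ≤ 1 / 2, η s = 1)
    (hη_zero : ∀ s ≥ 1, η s = 0) :
    ∃ C > 0, ∀ (n : ℕ) (T : ℝ) (w H : STn n → ℝ), ContDiff ℝ 2 w →
      IntegrableOn H (Ioo 0 T ×ˢ univ) →
      (∃ K, IsCompact K ∧ EqOn w 0 (Ioo 0 T ×ˢ Kᶜ)) →
      (∀ z ∈ Ioo 0 T ×ˢ univ, H z ≤ boxD w z) →
      ∀ R, 0 < R → R ≤ T →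
        (∫ x, dtD w (0, x)) + ∫ z in Ioo 0 T ×ˢ univ, H z * η (z.1 / R) ^ k ≤
          C * R ^ (-2 : ℝ) *
            ∫ z in Ioo 0 T ×ˢ univ, |w z| * (cutoffStar η (z.1 / R) ^ k) ^ (1 / p) := by
  have hp₀ : 0 ≤ p := zero_le_one.trans hp.le
  have hkp : 2 + k * (1 / p) ≤ (k : ℝ) := two_add_mul_one_div_le hp hk
  obtain ⟨C, hC, hbound⟩ :=
    exists_abs_deriv_deriv_pow_div_le_cutoffStar hη hη_nonneg hη_one hη_zero hp₀ hkp
  refine ⟨C, hC, fun n T w H hw hH ⟨K, hK, hwK⟩ hbox R hR hRT => ?_⟩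
  set ψ : ℝ → ℝ := fun t => η (t / R) ^ k
  have hψ : ContDiff ℝ 2 ψ := (hη.comp (contDiff_id.div_const R)).pow k
  have hk₀ : k ≠ 0 := by
    rintro rfl
    norm_num at hkp
  have hψ0 : ψ =ᶠ[𝓝 0] 1 := by
    filter_upwards [Iio_mem_nhds (half_pos hR)] with t (ht : t < R / 2)
    have : t / R ≤ 1 / 2 := by rw [div_le_iff₀ hR]; linarith
    simp [ψ, hη_one _ this]
  have hψT : ψ T = 0 := by simp [ψ, hη_zero _ ((one_le_div hR).2 hRT), hk₀]
  calc (∫ x, dtD w (0, x)) + ∫ z in Ioo 0 T ×ˢ univ, H z * ψ z.1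
      ≤ ∫ z in Ioo 0 T ×ˢ univ, w z * deriv (deriv ψ) z.1 :=
        integral_dtD_add_setIntegral_mul_le (hR.le.trans hRT) hw hK hwK hH hbox hψ
          (fun t => pow_nonneg (hη_nonneg _) k) hψ0 hψT
    _ ≤ _ := setIntegral_mul_le_of_abs_le_cutoffStar hp₀ hη.continuous hη_nonneg
        (hψ.iterate_deriv' 0 2).continuous (hbound R hR) hw.continuous hK hwK

/-- The test-function lemma of Ikeda–Sobajima–Wakasa (Lemma 2.2). -/
theorem test_function_lemma (n : ℕ) (hn : 2 ≤ n) (pbar : ℝ) (hpbar : 1 < pbar)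
    (k : ℕ) (hk : 2 * (pbar / (pbar - 1)) ≤ (k : ℝ))
    (r₀ : ℝ) (hr₀ : 0 < r₀)
    (η : ℝ → ℝ) (hηsm : ContDiff ℝ ∞ η) (hmono : AntitoneOn η (Set.Ici 0))
    (hη1 : ∀ s : ℝ, s ≤ 1/2 → η s = 1) (hη0 : ∀ s : ℝ, 1 ≤ s → η s = 0)
    (hstrict : StrictAntiOn η (Set.Ioo (1/2 : ℝ) 1)) :
    ∃ C > (0 : ℝ), ∀ T ε : ℝ, 1 < T → 0 < ε →
      ∀ f g : Spc n → ℝ, ContDiff ℝ ∞ f → HasCompactSupport f →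
        ContDiff ℝ ∞ g → HasCompactSupport g →
      ∀ w H : STn n → ℝ, ContDiff ℝ 2 w → Continuous H →
        IntegrableOn H (Set.Ioo 0 T ×ˢ (Set.univ : Set (Spc n))) volume →
        (∀ x, w (0, x) = ε * f x) → (∀ x, dtD w (0, x) = ε * g x) →
        (∀ z : STn n, 0 ≤ z.1 → z.1 + r₀ < ‖z.2‖ → w z = 0) →
        (∀ z : STn n, 0 < z.1 → z.1 < T → H z ≤ boxD w z) →
        ∀ R : ℝ, 1 ≤ R → R < T →
          ε * (∫ x, g x) +
              ∫ z in Set.Ioo 0 T ×ˢ (Set.univ : Set (Spc n)), H z * (η (z.1 / R)) ^ k ≤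
            C * R ^ (-2 : ℝ) *
              ∫ z in Set.Ioo 0 T ×ˢ (Set.univ : Set (Spc n)),
                |w z| * (((if z.1 / R < 1/2 then 0 else η (z.1 / R)) ^ k) ^ (1 / pbar)) := by
  obtain ⟨C, hC, hmain⟩ := test_function_lemma_general hpbar hk (hηsm.of_le ENat.LEInfty.out)
    (nonneg_of_antitoneOn_Ici hmono (fun s hs => by simp [hη1 s (hs.trans one_half_pos.le)])
      fun s hs => (hη0 s hs).ge) hη1 hη0
  refine ⟨C, hC, fun T ε _ _ f g _ _ _ _ w H hw _ hH _ hwt hsupp hbox R hR hRT => ?_⟩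
  have hwK : EqOn w 0 (Ioo 0 T ×ˢ (Metric.closedBall 0 (T + r₀))ᶜ) := fun z hz =>
    hsupp z hz.1.1.le <| (add_lt_add_left hz.1.2 r₀).trans (by simpa using hz.2)
  simpa only [hwt, integral_const_mul, cutoffStar] using
    hmain n T w H hw hH ⟨_, isCompact_closedBall _ _, hwK⟩ (fun z hz => hbox z hz.1.1 hz.1.2) R
      (one_pos.trans_le hR) hRT.le
end

section
/- Let n ≥ 2 and let 2 ≤ p < q < ∞ satisfy 1/p − 1/q ≤ 1/n. Then there exists a constant C > 0 such that for every t ≥ 0 and every C^∞ function v on [0,∞) × ℝⁿ which is Schwartz in the x-variable, ‖χ_{1,t} v(t,·)‖_{L^q(ℝⁿ)} ≤ C (1+t)^{−n(1/p−1/q)} Σ_{|α| ≤ 1} ‖(Γ^α v)(t,·)‖_{L^p(ℝⁿ)}. -/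
/-!
In the interior region `|x| ≤ 2/3 (1 + t)` the Klainerman fields control `(1 + t) ∂_j` pointwise:
for bounded `t` because `∂_j` is one of the fields, and for large `t` because
`(t² - |x|²) ∂_j = t L_j - x_j S - ∑_k x_k Ω_{kj}` with `t² - |x|²` comparable to `t²`.

It therefore suffices to have, for `R = 1 + t` and `C¹` functions `g` on `ℝⁿ`, the scale-invariant
Sobolev inequality
`‖g‖_{L^q(|x| ≤ R/2)} ≤ C R^{-n(1/p - 1/q)} ‖|g| + R |∇g|‖_{L^p(|x| ≤ 2R/3)}`.
A dilation reduces it to `R = 1`. There, multiply `g` by a cutoff, apply the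
Gagliardo–Nirenberg–Sobolev inequality with an exponent `r ≤ p`, and pass from `L^r` to `L^p` by
Hölder on the bounded support; such an `r` exists because `1/p - 1/q ≤ 1/n`.
-/

open MeasureTheory Real ENNReal FourierTransform
open scoped ContDiff

section Sobolev

open Module Metric
open scoped NNReal

theorem exists_sobolev_exponent {d p q : ℝ} (hd : 1 < d) (hp : 1 ≤ p) (hq : 0 < q)
    (hpq : 1 / p - 1 / q ≤ 1 / d) :
    ∃ r, 1 ≤ r ∧ r < d ∧ r ≤ p ∧ r⁻¹ - d⁻¹ ≤ q⁻¹ := by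
  -- `r₀` is the Sobolev exponent that lands exactly in `L^q`; it may be smaller than `1`.
  set r₀ : ℝ := (d⁻¹ + q⁻¹)⁻¹ with hr₀
  have hd0 : 0 < d := zero_lt_one.trans hd
  have hr₀d : r₀ < d := by
    rw [hr₀, inv_lt_comm₀ (by positivity) hd0]
    exact lt_add_of_pos_right _ (inv_pos.2 hq)
  have hr₀p : r₀ ≤ p := by
    rw [hr₀, inv_le_comm₀ (by positivity) (by positivity)]
    simp only [one_div] at hpq
    linarith
  refine ⟨max 1 r₀, le_max_left _ _, max_lt hd hr₀d, max_le hp hr₀p, ?_⟩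
  rw [sub_le_iff_le_add']
  exact inv_le_of_inv_le₀ (by positivity) (le_max_right 1 r₀)

theorem eLpNorm_le_eLpNorm_mul_rpow_measure_of_support_subset {α F : Type*} [MeasurableSpace α]
    {μ : Measure α} [NormedAddCommGroup F] {f : α → F} {s : Set α} {p q : ℝ≥0∞} (hpq : p ≤ q)
    (hf : AEStronglyMeasurable f μ) (hs : Function.support f ⊆ s) :
    eLpNorm f p μ ≤ eLpNorm f q μ * μ s ^ (1 / p.toReal - 1 / q.toReal) := by
  have hrestrict (r : ℝ≥0∞) : eLpNorm f r (μ.restrict s) = eLpNorm f r μ :=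
    eLpNorm_restrict_eq_of_support_subset (f := f) hs
  simpa only [hrestrict, Measure.restrict_apply_univ] using
    eLpNorm_le_eLpNorm_mul_rpow_measure_univ hpq (hf.restrict (s := s))

theorem norm_fderiv_smul_le {𝕜 E F : Type*} [NontriviallyNormedField 𝕜] [NormedAddCommGroup E]
    [NormedSpace 𝕜 E] [NormedAddCommGroup F] [NormedSpace 𝕜 F] {φ : E → 𝕜} {g : E → F} {x : E}
    {M : ℝ} (hφ : DifferentiableAt 𝕜 φ x) (hg : DifferentiableAt 𝕜 g x) (hφM : ‖φ x‖ ≤ M)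
    (hφ'M : ‖fderiv 𝕜 φ x‖ ≤ M) :
    ‖fderiv 𝕜 (fun y ↦ φ y • g y) x‖ ≤ M * (‖g x‖ + ‖fderiv 𝕜 g x‖) := by
  rw [fderiv_fun_smul hφ hg]
  calc ‖φ x • fderiv 𝕜 g x + (fderiv 𝕜 φ x).smulRight (g x)‖
      ≤ ‖φ x‖ * ‖fderiv 𝕜 g x‖ + ‖fderiv 𝕜 φ x‖ * ‖g x‖ := by
        refine (norm_add_le _ _).trans_eq ?_
        rw [norm_smul, ContinuousLinearMap.norm_smulRight_apply]
    _ ≤ M * ‖fderiv 𝕜 g x‖ + M * ‖g x‖ := by gcongr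
    _ = M * (‖g x‖ + ‖fderiv 𝕜 g x‖) := by ring

variable {E : Type*} [NormedAddCommGroup E] [NormedSpace ℝ E] [FiniteDimensional ℝ E]
  [MeasurableSpace E] [BorelSpace E] {μ : Measure E} [μ.IsAddHaarMeasure]

theorem eLpNorm_comp_smul_restrict_preimage {ε : Type*} [TopologicalSpace ε] [ContinuousENorm ε]
    {R : ℝ} (hR : R ≠ 0) (f : E → ε) (p : ℝ≥0∞) (s : Set E) :
    eLpNorm (fun x ↦ f (R • x)) p (μ.restrict ((R • ·) ⁻¹' s)) =
      ENNReal.ofReal (|R| ^ (-(finrank ℝ E / p.toReal))) * eLpNorm f p (μ.restrict s) := by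
  have hemb : MeasurableEmbedding (fun x : E ↦ R • x) := measurableEmbedding_const_smul₀ hR
  have hmap : (μ.restrict ((R • ·) ⁻¹' s)).map (R • ·) =
      ENNReal.ofReal |(R ^ finrank ℝ E)⁻¹| • μ.restrict s := by
    rw [← hemb.restrict_map, Measure.map_addHaar_smul μ hR, Measure.restrict_smul]
  have hfactor : 0 < |(R ^ finrank ℝ E)⁻¹| := by positivity
  rw [← Function.comp_def f, ← hemb.eLpNorm_map_measure, hmap,
    eLpNorm_smul_measure_of_ne_zero (ENNReal.ofReal_pos.2 hfactor).ne', smul_eq_mul,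
    ENNReal.ofReal_rpow_of_pos hfactor]
  congr 2
  rw [abs_inv, abs_pow, ← Real.rpow_natCast, ← Real.rpow_neg (abs_nonneg R),
    ← Real.rpow_mul (abs_nonneg R)]
  simp [div_eq_mul_inv]

theorem eLpNorm_comp_smul_restrict_closedBall {ε : Type*} [TopologicalSpace ε] [ContinuousENorm ε]
    {R : ℝ} (hR : 0 < R) (f : E → ε) (p : ℝ≥0∞) (r : ℝ) :
    eLpNorm (fun x ↦ f (R • x)) p (μ.restrict (closedBall 0 r)) =
      ENNReal.ofReal (R ^ (-(finrank ℝ E / p.toReal))) *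
        eLpNorm f p (μ.restrict (closedBall 0 (r * R))) := by
  have hball : (R • ·) ⁻¹' closedBall (0 : E) (r * R) = closedBall 0 r := by
    ext x
    simp [norm_smul, abs_of_pos hR, mul_comm r, hR]
  simpa only [hball, abs_of_pos hR] using
    eLpNorm_comp_smul_restrict_preimage (μ := μ) hR.ne' f p (closedBall 0 (r * R))

variable {F : Type*} [NormedAddCommGroup F] [NormedSpace ℝ F] [FiniteDimensional ℝ F]

theorem exists_eLpNorm_le_mul_eLpNorm_fderiv_of_support_subset {s : Set E}
    (hs : Bornology.IsBounded s) (hE : 2 ≤ finrank ℝ E) {p q : ℝ≥0} (hp : 1 ≤ p) (hq : 0 < q)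
    (hpq : 1 / (p : ℝ) - 1 / q ≤ 1 / finrank ℝ E) :
    ∃ C : ℝ≥0, ∀ u : E → F, ContDiff ℝ 1 u → Function.support u ⊆ s →
      eLpNorm u q μ ≤ C * eLpNorm (fderiv ℝ u) p μ := by
  obtain ⟨r, hr1, hrd, hrp, hrq⟩ := exists_sobolev_exponent
    (show (1 : ℝ) < finrank ℝ E by exact_mod_cast hE) (mod_cast hp) (mod_cast hq) hpq
  lift r to ℝ≥0 using zero_le_one.trans hr1
  norm_cast at hr1 hrp
  set D : ℝ≥0∞ := μ (closure s) ^ (1 / (r : ℝ) - 1 / p)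
  have hD : D ≠ ⊤ := by
    refine ENNReal.rpow_ne_top_of_nonneg (sub_nonneg.2 ?_) hs.closure.measure_lt_top.ne
    exact one_div_le_one_div_of_le (by positivity) (mod_cast hrp)
  refine ⟨eLpNormLESNormFDerivOfLeConst F μ s r q * D.toNNReal, fun u hu hus ↦ ?_⟩
  have hsupport : Function.support (fderiv ℝ u) ⊆ closure s :=
    (support_fderiv_subset ℝ).trans (closure_mono hus)
  calc eLpNorm u q μ
      ≤ eLpNormLESNormFDerivOfLeConst F μ s r q * eLpNorm (fderiv ℝ u) r μ :=
        eLpNorm_le_eLpNorm_fderiv_of_le μ hu hus hr1 (mod_cast hrd) hrq hs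
    _ ≤ eLpNormLESNormFDerivOfLeConst F μ s r q * (eLpNorm (fderiv ℝ u) p μ * D) := by
        gcongr
        exact eLpNorm_le_eLpNorm_mul_rpow_measure_of_support_subset
          (mod_cast hrp)
          (hu.continuous_fderiv one_ne_zero).aestronglyMeasurable hsupport
    _ = (eLpNormLESNormFDerivOfLeConst F μ s r q * D.toNNReal : ℝ≥0) *
          eLpNorm (fderiv ℝ u) p μ := by
        rw [ENNReal.coe_mul, ENNReal.coe_toNNReal hD]
        ring

theorem exists_eLpNorm_closedBall_le (hE : 2 ≤ finrank ℝ E) {p q : ℝ≥0} (hp : 1 ≤ p)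
    (hq : 0 < q) (hpq : 1 / (p : ℝ) - 1 / q ≤ 1 / finrank ℝ E) (c : E) {r₁ r₂ : ℝ}
    (hr₁ : 0 < r₁) (hr : r₁ < r₂) :
    ∃ C : ℝ≥0, ∀ g : E → F, ContDiff ℝ 1 g →
      eLpNorm g q (μ.restrict (closedBall c r₁)) ≤
        C * eLpNorm (fun x ↦ ‖g x‖ + ‖fderiv ℝ g x‖) p (μ.restrict (closedBall c r₂)) := by
  obtain ⟨C, hC⟩ := exists_eLpNorm_le_mul_eLpNorm_fderiv_of_support_subset (F := F) (μ := μ)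
    (isBounded_closedBall (x := c) (r := r₂)) hE hp hq hpq
  let φ : ContDiffBump c := ⟨r₁, r₂, hr₁, hr⟩
  have hφ : ContDiff ℝ 1 φ := φ.contDiff
  obtain ⟨M, hM⟩ := (hφ.continuous_fderiv one_ne_zero).bounded_above_of_compact_support
    (φ.hasCompactSupport.fderiv (𝕜 := ℝ))
  refine ⟨C * (max 1 M).toNNReal, fun g hg ↦ ?_⟩
  set u : E → F := fun x ↦ φ x • g x
  have hu : ContDiff ℝ 1 u := hφ.smul hg
  have hu_tsupport : tsupport u ⊆ closedBall c r₂ :=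
    (closure_mono (Function.support_smul_subset_left _ _)).trans_eq φ.tsupport_eq
  have hu_fderiv (x : E) : ‖fderiv ℝ u x‖ ≤ max 1 M * ‖‖g x‖ + ‖fderiv ℝ g x‖‖ := by
    rw [Real.norm_of_nonneg (by positivity)]
    refine norm_fderiv_smul_le (hφ.differentiable one_ne_zero x) (hg.differentiable one_ne_zero x)
      ?_ ((hM x).trans (le_max_right _ _))
    rw [Real.norm_of_nonneg φ.nonneg]
    exact φ.le_one.trans (le_max_left _ _)
  calc eLpNorm g q (μ.restrict (closedBall c r₁))
      = eLpNorm u q (μ.restrict (closedBall c r₁)) := by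
        refine eLpNorm_congr_ae (ae_restrict_of_forall_mem measurableSet_closedBall fun x hx ↦ ?_)
        simp only [u, φ.one_of_mem_closedBall hx, one_smul]
    _ ≤ eLpNorm u q μ := eLpNorm_restrict_le ..
    _ ≤ C * eLpNorm (fderiv ℝ u) p μ := hC u hu ((subset_tsupport u).trans hu_tsupport)
    _ = C * eLpNorm (fderiv ℝ u) p (μ.restrict (closedBall c r₂)) := by
        rw [eLpNorm_restrict_eq_of_support_subset (f := fderiv ℝ u)
          ((support_fderiv_subset ℝ).trans hu_tsupport)]
    _ ≤ C * (ENNReal.ofReal (max 1 M) *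
          eLpNorm (fun x ↦ ‖g x‖ + ‖fderiv ℝ g x‖) p (μ.restrict (closedBall c r₂))) := by
        gcongr
        exact eLpNorm_le_mul_eLpNorm_of_ae_le_mul (.of_forall hu_fderiv) p
    _ = _ := by rw [ENNReal.coe_mul, ENNReal.ofReal, mul_assoc]

theorem exists_eLpNorm_closedBall_mul_le (hE : 2 ≤ finrank ℝ E) {p q : ℝ≥0} (hp : 1 ≤ p)
    (hq : 0 < q) (hpq : 1 / (p : ℝ) - 1 / q ≤ 1 / finrank ℝ E) {r₁ r₂ : ℝ} (hr₁ : 0 < r₁)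
    (hr : r₁ < r₂) :
    ∃ C : ℝ≥0, ∀ g : E → F, ContDiff ℝ 1 g → ∀ R > 0,
      eLpNorm g q (μ.restrict (closedBall 0 (r₁ * R))) ≤
        ENNReal.ofReal (C * R ^ (-(finrank ℝ E : ℝ) * (1 / p - 1 / q))) *
          eLpNorm (fun x ↦ ‖g x‖ + R * ‖fderiv ℝ g x‖) p
            (μ.restrict (closedBall 0 (r₂ * R))) := by
  obtain ⟨C, hC⟩ := exists_eLpNorm_closedBall_le (F := F) (μ := μ) hE hp hq hpq 0 hr₁ hr
  refine ⟨C, fun g hg R hR ↦ ?_⟩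
  have hfderiv (x : E) : ‖fderiv ℝ (fun y ↦ g (R • y)) x‖ = R * ‖fderiv ℝ g (R • x)‖ := by
    rw [fderiv_comp_smul, norm_smul, Real.norm_of_nonneg hR.le]
  have hunit := hC (fun x ↦ g (R • x)) (hg.comp (contDiff_const_smul R))
  simp only [hfderiv] at hunit
  rw [eLpNorm_comp_smul_restrict_closedBall hR g,
    eLpNorm_comp_smul_restrict_closedBall hR fun x ↦ ‖g x‖ + R * ‖fderiv ℝ g x‖] at hunit
  simp only [ENNReal.coe_toReal] at hunit
  set d : ℝ := (finrank ℝ E : ℝ)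
  set N := eLpNorm (fun x ↦ ‖g x‖ + R * ‖fderiv ℝ g x‖) p (μ.restrict (closedBall 0 (r₂ * R)))
  calc eLpNorm g q (μ.restrict (closedBall 0 (r₁ * R)))
      = ENNReal.ofReal (R ^ (d / q)) * (ENNReal.ofReal (R ^ (-(d / q))) *
          eLpNorm g q (μ.restrict (closedBall 0 (r₁ * R)))) := by
        rw [← mul_assoc, ← ENNReal.ofReal_mul (by positivity), ← Real.rpow_add hR]
        simp
    _ ≤ ENNReal.ofReal (R ^ (d / q)) * (C * (ENNReal.ofReal (R ^ (-(d / p))) * N)) := by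
        gcongr _ * ?_
    _ = ENNReal.ofReal (C * R ^ (-d * (1 / p - 1 / q))) * N := by
        have hexp : -d * (1 / p - 1 / q) = d / q + -(d / p) := by ring
        rw [hexp, Real.rpow_add hR, ENNReal.ofReal_mul (by positivity),
          ENNReal.ofReal_mul (by positivity), ENNReal.ofReal_coe_nnreal]
        ring

end Sobolev

section Klainerman

open Module Metric
open scoped NNReal

variable {n : ℕ}

theorem SumW_one (Φ : (STn n → ℝ) → ℝ≥0∞) (v : STn n → ℝ) :
    SumW 1 Φ v = Φ v + ∑ i, Φ (Gop i v) := by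
  rw [SumW, Finset.sum_range_succ, Finset.sum_range_one,
    ← (Equiv.funUnique (Fin 1) (GIdx n)).symm.sum_comp]
  simp [GwL, List.ofFn_succ]

theorem continuous_Gop {v : STn n → ℝ} (hv : ContDiff ℝ 1 v) (i : GIdx n) :
    Continuous (Gop i v) := by
  have hdirD (w : STn n) : Continuous (dirD w v) :=
    (hv.continuous_fderiv one_ne_zero).clm_apply continuous_const
  have hdtD : Continuous (dtD v) := hdirD _
  have hdxD (j : Fin n) : Continuous (dxD j v) := hdirD _
  rcases i with (_ | j) | j | ⟨j, k⟩ | _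
  · exact hdtD
  · exact hdxD j
  · change Continuous fun p : STn n ↦ p.1 * dxD j v p + p.2 j * dtD v p
    fun_prop
  · change Continuous fun p : STn n ↦ p.2 j * dxD k v p - p.2 k * dxD j v p
    fun_prop
  · change Continuous fun p : STn n ↦ p.1 * dtD v p + ∑ j, p.2 j * dxD j v p
    fun_prop

theorem fderiv_slice_single {v : STn n → ℝ} {t : ℝ} {x : Spc n}
    (hv : DifferentiableAt ℝ v (t, x)) (j : Fin n) :
    fderiv ℝ (fun y ↦ v (t, y)) x (EuclideanSpace.single j 1) = dxD j v (t, x) := by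
  have hslice : HasFDerivAt (fun y ↦ v (t, y))
      ((fderiv ℝ v (t, x)).comp (ContinuousLinearMap.inr ℝ ℝ (Spc n))) x :=
    hv.hasFDerivAt.comp x (hasFDerivAt_prodMk_right t x)
  simp [hslice.fderiv, dxD, dirD]

theorem sq_sub_norm_sq_mul_dxD (v : STn n → ℝ) (t : ℝ) (x : Spc n) (j : Fin n) :
    (t ^ 2 - ‖x‖ ^ 2) * dxD j v (t, x) =
      t * LD j v (t, x) - x j * SD v (t, x) - ∑ k, x k * RotD k j v (t, x) := by
  have hrot : ∑ k, x k * RotD k j v (t, x) =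
      (∑ k, x k ^ 2) * dxD j v (t, x) - x j * ∑ k, x k * dxD k v (t, x) := by
    rw [Finset.sum_mul, Finset.mul_sum, ← Finset.sum_sub_distrib]
    exact Finset.sum_congr rfl fun k _ ↦ by simp only [RotD]; ring
  rw [hrot, EuclideanSpace.real_norm_sq_eq]
  simp only [LD, SD]
  ring

theorem abs_Gop_le_sum (v : STn n → ℝ) (P : STn n) (i : GIdx n) :
    |Gop i v P| ≤ ∑ i, |Gop i v P| :=
  Finset.single_le_sum (f := fun i ↦ |Gop i v P|) (fun _ _ ↦ abs_nonneg _) (Finset.mem_univ i)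

theorem sq_sub_norm_sq_mul_abs_dxD_le (v : STn n → ℝ) {t : ℝ} {x : Spc n} (hx : ‖x‖ ≤ t)
    (j : Fin n) :
    (t ^ 2 - ‖x‖ ^ 2) * |dxD j v (t, x)| ≤ (n + 2) * t * ∑ i, |Gop i v (t, x)| := by
  set G := ∑ i, |Gop i v (t, x)|
  have ht : 0 ≤ t := (norm_nonneg x).trans hx
  have habs_mul {a : ℝ} (ha : |a| ≤ t) (i : GIdx n) : |a * Gop i v (t, x)| ≤ t * G := by
    rw [abs_mul]
    exact mul_le_mul ha (abs_Gop_le_sum v _ i) (abs_nonneg _) ht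
  have hcoord (k : Fin n) : |x k| ≤ t := (PiLp.norm_apply_le x k).trans hx
  have hboost : |t * LD j v (t, x)| ≤ t * G := habs_mul (abs_of_nonneg ht).le (.inr (.inl j))
  have hscaling : |x j * SD v (t, x)| ≤ t * G := habs_mul (hcoord j) (.inr (.inr (.inr ())))
  have hrotation : |∑ k, x k * RotD k j v (t, x)| ≤ n * (t * G) :=
    calc |∑ k, x k * RotD k j v (t, x)|
        ≤ ∑ k, |x k * RotD k j v (t, x)| := Finset.abs_sum_le_sum_abs _ _
      _ ≤ ∑ _k : Fin n, t * G :=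
          Finset.sum_le_sum fun k _ ↦ habs_mul (hcoord k) (.inr (.inr (.inl (k, j))))
      _ = n * (t * G) := by simp
  calc (t ^ 2 - ‖x‖ ^ 2) * |dxD j v (t, x)|
      = |(t ^ 2 - ‖x‖ ^ 2) * dxD j v (t, x)| := by
        rw [abs_mul, abs_of_nonneg (sub_nonneg.2 (pow_le_pow_left₀ (norm_nonneg x) hx 2))]
    _ ≤ |t * LD j v (t, x)| + |x j * SD v (t, x)| + |∑ k, x k * RotD k j v (t, x)| := by
        rw [sq_sub_norm_sq_mul_dxD]
        exact (abs_sub _ _).trans (add_le_add_left (abs_sub _ _) _)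
    _ ≤ (n + 2) * t * G := by linarith

theorem one_add_mul_abs_dxD_le (v : STn n → ℝ) {t : ℝ} {x : Spc n}
    (hx : ‖x‖ ≤ 2 / 3 * (1 + t)) (j : Fin n) :
    (1 + t) * |dxD j v (t, x)| ≤ 5 * (n + 2) * ∑ i, |Gop i v (t, x)| := by
  set G := ∑ i, |Gop i v (t, x)|
  have hG : 0 ≤ G := Finset.sum_nonneg fun _ _ ↦ abs_nonneg _
  have hnG : 0 ≤ n * G := by positivity
  rcases le_total t 4 with ht | ht
  · calc (1 + t) * |dxD j v (t, x)| ≤ 5 * G := by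
          gcongr
          · linarith
          · exact abs_Gop_le_sum v _ (.inl (some j))
      _ ≤ 5 * (n + 2) * G := by linarith
  · have hxt : ‖x‖ ≤ 5 / 6 * t := by linarith
    have hweight : 11 / 36 * t ^ 2 ≤ t ^ 2 - ‖x‖ ^ 2 := by
      have := pow_le_pow_left₀ (norm_nonneg x) hxt 2
      linarith
    have hfields : 11 / 36 * t * |dxD j v (t, x)| ≤ (n + 2) * G := by
      refine le_of_mul_le_mul_left ?_ (show 0 < t by linarith)
      calc t * (11 / 36 * t * |dxD j v (t, x)|)
          = 11 / 36 * t ^ 2 * |dxD j v (t, x)| := by ring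
        _ ≤ (t ^ 2 - ‖x‖ ^ 2) * |dxD j v (t, x)| := by gcongr
        _ ≤ (n + 2) * t * G := sq_sub_norm_sq_mul_abs_dxD_le v (by linarith) j
        _ = t * ((n + 2) * G) := by ring
    calc (1 + t) * |dxD j v (t, x)|
        ≤ 5 / 4 * t * |dxD j v (t, x)| := by
          gcongr
          linarith
      _ ≤ 5 * (n + 2) * G := by linarith

variable (n) in
theorem exists_norm_add_one_add_mul_norm_fderiv_slice_le :
    ∃ K : ℝ≥0, ∀ v : STn n → ℝ, ∀ t : ℝ, ∀ x : Spc n, DifferentiableAt ℝ v (t, x) →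
      ‖x‖ ≤ 2 / 3 * (1 + t) →
        ‖v (t, x)‖ + (1 + t) * ‖fderiv ℝ (fun y ↦ v (t, y)) x‖ ≤
          K * (|v (t, x)| + ∑ i, |Gop i v (t, x)|) := by
  obtain ⟨A, hA, hopNorm⟩ :=
    (EuclideanSpace.basisFun (Fin n) ℝ).toBasis.exists_opNorm_le (F := ℝ)
  lift A to ℝ≥0 using hA.le
  refine ⟨1 + A * (5 * (n + 2)), fun v t x hv hx ↦ ?_⟩
  set G := ∑ i, |Gop i v (t, x)|
  have hG : 0 ≤ G := Finset.sum_nonneg fun _ _ ↦ abs_nonneg _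
  have ht : 0 ≤ 1 + t := by linarith [norm_nonneg x]
  have hgrad : ‖(1 + t) • fderiv ℝ (fun y ↦ v (t, y)) x‖ ≤ A * (5 * (n + 2) * G) := by
    refine hopNorm (by positivity) fun j ↦ ?_
    simpa [fderiv_slice_single hv, abs_of_nonneg ht] using one_add_mul_abs_dxD_le v hx j
  rw [norm_smul, Real.norm_of_nonneg ht] at hgrad
  have hv0 : 0 ≤ A * (5 * ((n : ℝ) + 2)) * |v (t, x)| := by positivity
  push_cast
  rw [Real.norm_eq_abs]
  linarith

theorem eLpNorm_abs_add_sum_abs_Gop_le_SumW {p : ℝ≥0∞} (hp : 1 ≤ p) {v : STn n → ℝ}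
    (hv : ContDiff ℝ 1 v) (t : ℝ) (μ : Measure (Spc n)) :
    eLpNorm (fun x ↦ |v (t, x)| + ∑ i, |Gop i v (t, x)|) p μ ≤
      SumW 1 (fun f ↦ eLpNorm (fun x ↦ f (t, x)) p μ) v := by
  have habs (f : STn n → ℝ) : eLpNorm (fun x ↦ |f (t, x)|) p μ = eLpNorm (fun x ↦ f (t, x)) p μ :=
    eLpNorm_norm fun x ↦ f (t, x)
  have hmeas {f : STn n → ℝ} (hf : Continuous f) :
      AEStronglyMeasurable (fun x ↦ |f (t, x)|) μ :=
    Continuous.aestronglyMeasurable (by fun_prop)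
  have hmeas_Gop (i : GIdx n) : AEStronglyMeasurable (fun x ↦ |Gop i v (t, x)|) μ :=
    hmeas (continuous_Gop hv i)
  rw [SumW_one]
  simp only [← habs]
  refine (eLpNorm_add_le (hmeas hv.continuous)
    (Finset.aestronglyMeasurable_fun_sum _ fun i _ ↦ hmeas_Gop i) hp).trans ?_
  gcongr
  simpa only [Finset.sum_fn] using eLpNorm_sum_le (fun i _ ↦ hmeas_Gop i) hp

variable (n) in
theorem exists_eLpNorm_slice_add_fderiv_slice_le_mul_SumW :
    ∃ K : ℝ≥0, ∀ p : ℝ≥0∞, 1 ≤ p → ∀ μ : Measure (Spc n), ∀ v : STn n → ℝ, ContDiff ℝ 1 v →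
      ∀ t : ℝ, eLpNorm (fun x ↦ ‖v (t, x)‖ + (1 + t) * ‖fderiv ℝ (fun y ↦ v (t, y)) x‖) p
          (μ.restrict (closedBall 0 (2 / 3 * (1 + t)))) ≤
        K * SumW 1 (fun f ↦ eLpNorm (fun x ↦ f (t, x)) p μ) v := by
  obtain ⟨K, hK⟩ := exists_norm_add_one_add_mul_norm_fderiv_slice_le n
  refine ⟨K, fun p hp μ v hv t ↦ ?_⟩
  set B : Set (Spc n) := closedBall 0 (2 / 3 * (1 + t))
  have hpointwise : ∀ᵐ x ∂μ.restrict B,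
      ‖‖v (t, x)‖ + (1 + t) * ‖fderiv ℝ (fun y ↦ v (t, y)) x‖‖ ≤
        K * ‖|v (t, x)| + ∑ i, |Gop i v (t, x)|‖ := by
    refine ae_restrict_of_forall_mem measurableSet_closedBall fun x hx ↦ ?_
    have hx : ‖x‖ ≤ 2 / 3 * (1 + t) := mem_closedBall_zero_iff.1 hx
    have ht : 0 ≤ 1 + t := by linarith [norm_nonneg x]
    rw [Real.norm_of_nonneg (add_nonneg (norm_nonneg _) (mul_nonneg ht (norm_nonneg _)))]
    refine (hK v t x (hv.differentiable one_ne_zero _) hx).trans ?_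
    gcongr
    exact Real.le_norm_self _
  calc eLpNorm (fun x ↦ ‖v (t, x)‖ + (1 + t) * ‖fderiv ℝ (fun y ↦ v (t, y)) x‖) p (μ.restrict B)
      ≤ ENNReal.ofReal K * eLpNorm (fun x ↦ |v (t, x)| + ∑ i, |Gop i v (t, x)|) p
          (μ.restrict B) := eLpNorm_le_mul_eLpNorm_of_ae_le_mul hpointwise p
    _ ≤ K * SumW 1 (fun f ↦ eLpNorm (fun x ↦ f (t, x)) p μ) v := by
        rw [ENNReal.ofReal_coe_nnreal]
        gcongr
        exact (eLpNorm_restrict_le ..).trans (eLpNorm_abs_add_sum_abs_Gop_le_SumW hp hv t μ)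

theorem klainerman_sobolev_i_general (n : ℕ) (hn : 2 ≤ n) (p q : ℝ) (hp : 1 ≤ p) (hq : 0 < q)
    (hgap : 1 / p - 1 / q ≤ 1 / (n : ℝ)) :
    ∃ C > (0 : ℝ), ∀ v : STn n → ℝ, ContDiff ℝ 1 v → ∀ t : ℝ, -1 < t →
      eLpNorm (Set.indicator {x : Spc n | ‖x‖ < (1 + t) / 2} (fun x ↦ v (t, x)))
          (ENNReal.ofReal q) volume ≤
        ENNReal.ofReal (C * (1 + t) ^ (-(n : ℝ) * (1 / p - 1 / q))) *
          SumW 1 (fun f ↦ eLpNorm (fun x ↦ f (t, x)) (ENNReal.ofReal p) volume) v := by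
  lift p to ℝ≥0 using by linarith
  lift q to ℝ≥0 using hq.le
  simp only [ENNReal.ofReal_coe_nnreal]
  have hdim : finrank ℝ (Spc n) = n := finrank_euclideanSpace_fin
  obtain ⟨C, hC⟩ := exists_eLpNorm_closedBall_mul_le (E := Spc n) (F := ℝ) (μ := volume)
    (hdim.symm ▸ hn) (mod_cast hp) (mod_cast hq) (hdim.symm ▸ hgap)
    (r₁ := 1 / 2) (r₂ := 2 / 3) (by norm_num) (by norm_num)
  obtain ⟨K, hK⟩ := exists_eLpNorm_slice_add_fderiv_slice_le_mul_SumW n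
  -- `+ 1` because `C * K` may vanish
  refine ⟨C * K + 1, by positivity, fun v hv t ht ↦ ?_⟩
  have hR : 0 < 1 + t := by linarith
  set N := SumW 1 (fun f ↦ eLpNorm (fun x ↦ f (t, x)) p volume) v
  set A : ℝ := (1 + t) ^ (-(n : ℝ) * (1 / p - 1 / q))
  have hball : {x : Spc n | ‖x‖ < (1 + t) / 2} ⊆ closedBall 0 (1 / 2 * (1 + t)) := fun x hx ↦ by
    rw [mem_closedBall_zero_iff]
    linarith [hx.out]
  rw [eLpNorm_indicator_eq_eLpNorm_restrict (measurableSet_lt (by fun_prop) (by fun_prop))]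
  calc eLpNorm (fun x ↦ v (t, x)) q (volume.restrict {x | ‖x‖ < (1 + t) / 2})
      ≤ eLpNorm (fun x ↦ v (t, x)) q (volume.restrict (closedBall 0 (1 / 2 * (1 + t)))) :=
        eLpNorm_mono_measure _ (Measure.restrict_mono_set _ hball)
    _ ≤ ENNReal.ofReal (C * A) * (K * N) := by
        have := hC (fun x ↦ v (t, x)) (by fun_prop) (1 + t) hR
        rw [hdim] at this
        grw [this, hK p (mod_cast hp) volume v hv t]
    _ = ENNReal.ofReal (C * K * A) * N := by
        rw [mul_right_comm, ENNReal.ofReal_mul (q := K) (by positivity), ENNReal.ofReal_coe_nnreal,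
          mul_assoc]
    _ ≤ ENNReal.ofReal ((C * K + 1) * A) * N := by
        gcongr
        exact le_add_of_nonneg_right zero_le_one

end Klainerman

/-- Klainerman–Sobolev type inequality, part (i) of Lemma 3.2. -/
theorem klainerman_sobolev_i (n : ℕ) (hn : 2 ≤ n) (p q : ℝ) (hp : 2 ≤ p) (hpq : p < q)
    (hgap : 1/p - 1/q ≤ 1/(n : ℝ)) :
    ∃ C > (0 : ℝ), ∀ v : STn n → ℝ, ContDiff ℝ ∞ v → SchwartzInX v → ∀ t : ℝ, 0 ≤ t →
      eLpNorm (Set.indicator {x : Spc n | ‖x‖ < (1 + t)/2} (fun x => v (t, x)))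
          (ENNReal.ofReal q) volume ≤
        ENNReal.ofReal (C * (1 + t) ^ (-(n : ℝ) * (1/p - 1/q))) *
          SumW 1 (fun f => eLpNorm (fun x => f (t, x)) (ENNReal.ofReal p) volume) v := by
  obtain ⟨C, hC, hbound⟩ :=
    klainerman_sobolev_i_general n hn p q (by linarith) (by linarith) hgap
  exact ⟨C, hC, fun v hv _ t ht ↦ hbound v (hv.of_le (by simp)) t (by linarith)⟩
end
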